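/- Let d ≥ 2, δ ≥ 2, and 0 < s < d be integers, and let G be a finite simple graph with a proper white/black 2-coloring. Suppose there exists a set X of edges of G such that every white vertex of degree exactly d is incident to a number of edges of X different from s, and every black vertex of degree exactly δ is incident to at least 1 and at most δ−1 edges of X. Then there exists a labeling of the edges of G solving FDSO(s). -/

import Mathlib

/-- The four-letter alphabet `Σ = {A, H, T, X}`. -/
inductive Sig : Type
  | A | H | T | X
deriving DecidableEq

instance instFintypeSig : Fintype Sig where
  elems := {Sig.A, Sig.H, Sig.T, Sig.X}
  complete := by intro x; cases x <;> decide

/-- The multiset of labels assigned by `c` to the edges incident to `v`. -/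
def edgeLabels {V : Type*} [Fintype V] [DecidableEq V] (G : SimpleGraph V)
    [DecidableRel G.Adj] (c : Sym2 V → Sig) (v : V) : Multiset Sig :=
  (G.neighborFinset v).val.map (fun u => c s(v, u))

/-- The edge labeling `c` solves `FDSO(s)` on the properly 2-colored graph `G`: every white
vertex of degree exactly `d` sees one `A` and `d-1` `X`'s, or `s+1` `H`'s and `d-s-1` `X`'s,
or `d-s+1` `T`'s and `s-1` `X`'s; every black vertex of degree exactly `δ` sees at least one
`X`, or at least one `H` and at least one `T`. -/
def SolvesFDSO {V : Type*} [Fintype V] [DecidableEq V] (G : SimpleGraph V)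
    [DecidableRel G.Adj] (color : V → Bool) (d δ s : ℕ) (c : Sym2 V → Sig) : Prop :=
  (∀ v : V, color v = true → G.degree v = d →
    (edgeLabels G c v = Sig.A ::ₘ Multiset.replicate (d - 1) Sig.X ∨
     edgeLabels G c v =
       Multiset.replicate (s + 1) Sig.H + Multiset.replicate (d - s - 1) Sig.X ∨
     edgeLabels G c v =
       Multiset.replicate (d - s + 1) Sig.T + Multiset.replicate (s - 1) Sig.X)) ∧
  (∀ v : V, color v = false → G.degree v = δ →
    (Sig.X ∈ edgeLabels G c v ∨
      (Sig.H ∈ edgeLabels G c v ∧ Sig.T ∈ edgeLabels G c v)))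

/-- The number of edges of `X` incident to `v` (edges of the graph `G`). -/
def degIn {V : Type*} [Fintype V] [DecidableEq V] (G : SimpleGraph V) [DecidableRel G.Adj]
    (X : Finset (Sym2 V)) (v : V) : ℕ :=
  ((G.neighborFinset v).filter (fun u => s(v, u) ∈ X)).card

/-!
Select, at each white vertex of degree `d`, either `s + 1` incident edges of `X` or `d - s + 1`
incident edges outside `X`; one of these is possible precisely because the number of incident
edges of `X` is not `s`. A selected edge is labeled `H` or `T` according to whether it lies in `X`,
and all other edges are labeled `X`; the letter `A` is never needed. Each edge has at most one white
endpoint, so the selections do not interact. A black vertex of degree `δ` has an incident edge in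
`X`, labeled `X` or `H`, and one outside `X`, labeled `X` or `T`, whatever the selection is.
-/

/-- The labeling attached to a set `X` of edges and a set `M` of selected edges: selected edges get
`H` inside `X` and `T` outside `X`, and the remaining edges get the letter `Sig.X`. -/
def selectionLabel {V : Type*} [DecidableEq V] (X M : Finset (Sym2 V)) (e : Sym2 V) : Sig :=
  if e ∈ M then if e ∈ X then Sig.H else Sig.T else Sig.X

section SelectionLabel

variable {V : Type*} [DecidableEq V] {X L : Finset (Sym2 V)} {e : Sym2 V}

theorem selectionLabel_of_subset (hL : L ⊆ X) :
    selectionLabel X L = fun e => if e ∈ L then Sig.H else Sig.X := by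
  ext e
  exact ite_congr rfl (fun he => if_pos (hL he)) fun _ => rfl

theorem selectionLabel_of_disjoint (hL : Disjoint L X) :
    selectionLabel X L = fun e => if e ∈ L then Sig.T else Sig.X := by
  ext e
  exact ite_congr rfl (fun he => if_neg (Finset.disjoint_left.mp hL he)) fun _ => rfl

theorem selectionLabel_eq_X_or_H (he : e ∈ X) (M : Finset (Sym2 V)) :
    selectionLabel X M e = Sig.X ∨ selectionLabel X M e = Sig.H := by
  rw [selectionLabel, if_pos he]
  exact (ite_eq_or_eq _ _ _).symm

theorem selectionLabel_eq_X_or_T (he : e ∉ X) (M : Finset (Sym2 V)) :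
    selectionLabel X M e = Sig.X ∨ selectionLabel X M e = Sig.T := by
  rw [selectionLabel, if_neg he]
  exact (ite_eq_or_eq _ _ _).symm

end SelectionLabel

theorem exists_finset_mem_iff_of_isIndepSet {V : Type*} [Finite V] {G : SimpleGraph V}
    {W : Set V} (hW : G.IsIndepSet W) (L : V → Finset (Sym2 V)) :
    ∃ M : Finset (Sym2 V), ∀ v ∈ W, ∀ e ∈ G.incidenceSet v, (e ∈ M ↔ e ∈ L v) := by
  refine ⟨(Set.toFinite {e | ∃ w ∈ W, w ∈ e ∧ e ∈ L w}).toFinset, fun v hv e he => ?_⟩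
  rw [Set.Finite.mem_toFinset]
  refine ⟨fun ⟨w, hw, hwe, heL⟩ => ?_, fun heL => ⟨v, hv, he.2, heL⟩⟩
  obtain rfl : w = v := by
    by_contra hne
    have he_eq : e = s(w, v) := (Sym2.mem_and_mem_iff hne).mp ⟨hwe, he.2⟩
    exact hW hw hv hne (G.mem_edgeSet.mp (he_eq ▸ he.1))
  exact heL

section LocalCounts

variable {V : Type*} [Fintype V] [DecidableEq V] {G : SimpleGraph V} [DecidableRel G.Adj]
  {X : Finset (Sym2 V)} {v : V} {s : ℕ}

theorem degIn_pos_iff : 0 < degIn G X v ↔ ∃ u, G.Adj v u ∧ s(v, u) ∈ X := by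
  simp [degIn, Finset.card_pos, Finset.Nonempty]

variable (G X v) in
theorem degIn_add_degIn_compl : degIn G X v + degIn G Xᶜ v = G.degree v := by
  simpa only [degIn, Finset.mem_compl, G.card_neighborFinset_eq_degree] using
    Finset.card_filter_add_card_filter_not (s := G.neighborFinset v) (s(v, ·) ∈ X)

theorem exists_subset_degIn_eq {k : ℕ} (hk : k ≤ degIn G X v) : ∃ L ⊆ X, degIn G L v = k := by
  obtain ⟨S, hS, rfl⟩ := Finset.exists_subset_card_eq hk
  refine ⟨S.image (s(v, ·)), ?_, ?_⟩
  · exact Finset.image_subset_iff.mpr fun u hu => (Finset.mem_filter.mp (hS hu)).2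
  · rw [degIn]
    congr 1
    ext u
    have hadj : u ∈ S → G.Adj v u := fun hu =>
      (G.mem_neighborFinset v u).mp (Finset.mem_filter.mp (hS hu)).1
    simpa only [Finset.mem_filter, G.mem_neighborFinset, Finset.mem_image, Sym2.congr_right,
      exists_eq_right, and_iff_right_iff_imp] using hadj

theorem mem_edgeLabels {c : Sym2 V → Sig} {a : Sig} :
    a ∈ edgeLabels G c v ↔ ∃ u, G.Adj v u ∧ c s(v, u) = a := by
  simp [edgeLabels]

theorem edgeLabels_congr {c c' : Sym2 V → Sig} (h : ∀ e ∈ G.incidenceSet v, c e = c' e) :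
    edgeLabels G c v = edgeLabels G c' v :=
  Multiset.map_congr rfl fun u hu =>
    h _ ((G.mem_incidenceSet v u).mpr ((G.mem_neighborFinset v u).mp hu))

variable (G v) in
theorem edgeLabels_ite_mem (M : Finset (Sym2 V)) (a b : Sig) :
    edgeLabels G (fun e => if e ∈ M then a else b) v =
      Multiset.replicate (degIn G M v) a +
        Multiset.replicate (G.degree v - degIn G M v) b := by
  have hcompl : G.degree v - degIn G M v = degIn G Mᶜ v := by
    rw [← degIn_add_degIn_compl G M v, Nat.add_sub_cancel_left]
  rw [hcompl, edgeLabels, ← Multiset.filter_add_not (s(v, ·) ∈ M) (G.neighborFinset v).val,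
    Multiset.map_add]
  congr 1 <;> refine Multiset.eq_replicate.mpr ⟨?_, ?_⟩ <;>
    simp +contextual [degIn, Finset.card_def]

theorem exists_edgeLabels_selectionLabel_eq (hs : s ≤ G.degree v) (hne : degIn G X v ≠ s) :
    ∃ L : Finset (Sym2 V),
      edgeLabels G (selectionLabel X L) v =
        Multiset.replicate (s + 1) Sig.H + Multiset.replicate (G.degree v - s - 1) Sig.X ∨
      edgeLabels G (selectionLabel X L) v =
        Multiset.replicate (G.degree v - s + 1) Sig.T + Multiset.replicate (s - 1) Sig.X := by
  rcases hne.lt_or_gt with hlt | hgt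
  · have hcompl : G.degree v - s + 1 ≤ degIn G Xᶜ v := by
      have := degIn_add_degIn_compl G X v
      omega
    obtain ⟨L, hLX, hL⟩ := exists_subset_degIn_eq hcompl
    refine ⟨L, .inr ?_⟩
    rw [selectionLabel_of_disjoint (Finset.subset_compl_iff_disjoint_right.mp hLX),
      edgeLabels_ite_mem, hL]
    congr 2
    omega
  · obtain ⟨L, hLX, hL⟩ := exists_subset_degIn_eq (Nat.succ_le_of_lt hgt)
    refine ⟨L, .inl ?_⟩
    rw [selectionLabel_of_subset hLX, edgeLabels_ite_mem, hL, Nat.sub_sub]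

theorem X_mem_or_H_T_mem_edgeLabels_selectionLabel (hpos : 0 < degIn G X v)
    (hlt : degIn G X v < G.degree v) (M : Finset (Sym2 V)) :
    Sig.X ∈ edgeLabels G (selectionLabel X M) v ∨
      (Sig.H ∈ edgeLabels G (selectionLabel X M) v ∧
        Sig.T ∈ edgeLabels G (selectionLabel X M) v) := by
  have hcompl : 0 < degIn G Xᶜ v := by
    have := degIn_add_degIn_compl G X v
    omega
  obtain ⟨x, hx, hxX⟩ := degIn_pos_iff.mp hpos
  obtain ⟨y, hy, hyX⟩ := degIn_pos_iff.mp hcompl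
  rcases selectionLabel_eq_X_or_H hxX M with hxl | hxl
  · exact .inl (mem_edgeLabels.mpr ⟨x, hx, hxl⟩)
  rcases selectionLabel_eq_X_or_T (Finset.mem_compl.mp hyX) M with hyl | hyl
  · exact .inl (mem_edgeLabels.mpr ⟨y, hy, hyl⟩)
  · exact .inr ⟨mem_edgeLabels.mpr ⟨x, hx, hxl⟩, mem_edgeLabels.mpr ⟨y, hy, hyl⟩⟩

end LocalCounts

/-- If a properly 2-colored finite graph admits a solution to the forbidden
degree problem with forbidden degree `s` (white degree-`d` vertices incident to a number of
edges of `X` different from `s`; black degree-`δ` vertices incident to at least `1` and at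
most `δ-1` edges of `X`), then it admits an edge labeling solving `FDSO(s)`. -/
theorem stmt_17 {V : Type*} [Fintype V] [DecidableEq V]
    (G : SimpleGraph V) [DecidableRel G.Adj]
    (d δ s : ℕ) (hd : 2 ≤ d) (hδ : 2 ≤ δ) (hs0 : 0 < s) (hsd : s < d)
    (color : V → Bool)
    (hproper : ∀ ⦃u v : V⦄, G.Adj u v → color u ≠ color v)
    (hX : ∃ X : Finset (Sym2 V), ↑X ⊆ G.edgeSet ∧
      (∀ v : V, color v = true → G.degree v = d → degIn G X v ≠ s) ∧
      (∀ v : V, color v = false → G.degree v = δ →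
        1 ≤ degIn G X v ∧ degIn G X v ≤ δ - 1)) :
    ∃ c : Sym2 V → Sig, SolvesFDSO G color d δ s c := by
  obtain ⟨X, -, hwhite, hblack⟩ := hX
  have hindep : G.IsIndepSet {v | color v = true} := fun u hu v hv _ hadj =>
    hproper hadj (hu.trans hv.symm)
  choose! L hL using fun v (hv : color v = true) (hdeg : G.degree v = d) =>
    exists_edgeLabels_selectionLabel_eq (hdeg ▸ hsd.le) (hwhite v hv hdeg)
  obtain ⟨M, hM⟩ := exists_finset_mem_iff_of_isIndepSet hindep L
  refine ⟨selectionLabel X M, fun v hv hdeg => .inr ?_, fun v hv hdeg => ?_⟩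
  · have hlocal : edgeLabels G (selectionLabel X M) v = edgeLabels G (selectionLabel X (L v)) v :=
      edgeLabels_congr fun e he => by simp only [selectionLabel, hM v hv e he]
    rw [hlocal, ← hdeg]
    exact hL v hv hdeg
  · obtain ⟨hpos, hle⟩ := hblack v hv hdeg
    exact X_mem_or_H_T_mem_edgeLabels_selectionLabel hpos (by omega) M
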